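/- arXiv:2510.07104 — 2 statements merged into one kernel-verified Lean document; each statement's English description precedes it below -/
import Mathlib

section
/- Let h: ℝ → [0,1] be an increasing (non-decreasing) function, let s > 0, and let Y be a real-valued random variable. Then |E[h(Y+s)] − E[h(Y)]| ≤ Q(Y;s). -/
open MeasureTheory ProbabilityTheory Filter Set
open scoped ENNReal

/-- The concentration (Lévy) function `Q(Y;λ) = sup_{x ∈ ℝ} P(x ≤ Y ≤ x + λ)`. -/
noncomputable def concQ {Ω : Type*} [MeasurableSpace Ω] (μ : Measure Ω)
    (Y : Ω → ℝ) (lam : ℝ) : ℝ :=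
  ⨆ x : ℝ, (μ {ω | x ≤ Y ω ∧ Y ω ≤ x + lam}).toReal

/-!
For `f ≤ g`, the integral of `g - f` is the area between the two graphs. Slicing this area
horizontally, it is the integral over `t` of the measure of `{f < t ≤ g}`. For `f = h(Y)` and
`g = h(Y + s)` with `h` increasing, the slice at height `t` confines `Y` to an interval of length
`s`, so its measure is at most `Q(Y;s)`; it is empty unless `a < t ≤ b`, if `h` takes its values in
`[a, b]`.
-/

lemma exists_setOf_mem_Ioc_shift_subset_Icc {α β : Type*} [ConditionallyCompleteLinearOrder α]
    [AddCommGroup α] [IsOrderedAddMonoid α] [Preorder β] {h : α → β} (hmono : Monotone h)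
    (s : α) (t : β) : ∃ x, {y | t ∈ Ioc (h y) (h (y + s))} ⊆ Icc x (x + s) := by
  refine ⟨sInf {u | t ≤ h u} - s, fun y ⟨hlt, hle⟩ => ?_⟩
  have hlower : y ∈ lowerBounds {u | t ≤ h u} := fun u hu =>
    (hmono.reflect_lt (hlt.trans_le hu)).le
  rw [sub_add_cancel]
  exact ⟨sub_le_iff_le_add.2 (csInf_le ⟨y, hlower⟩ hle), le_csInf ⟨y + s, hle⟩ hlower⟩

section AreaBetween

variable {Ω : Type*} [MeasurableSpace Ω] {μ : Measure Ω} [SFinite μ] {f g : Ω → ℝ} {a b : ℝ}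

lemma lintegral_ofReal_sub_eq_lintegral_measure_mem_Ioc (hf : AEMeasurable f μ)
    (hg : AEMeasurable g μ) :
    ∫⁻ ω, ENNReal.ofReal (g ω - f ω) ∂μ = ∫⁻ t, μ {ω | t ∈ Ioc (f ω) (g ω)} := by
  have hregion : NullMeasurableSet {p : Ω × ℝ | p.2 ∈ Ioc (f p.1) (g p.1)} (μ.prod volume) :=
    (nullMeasurableSet_lt hf.comp_fst measurable_snd.aemeasurable).inter
      (nullMeasurableSet_le measurable_snd.aemeasurable hg.comp_fst)
  have hslice (t : ℝ) : NullMeasurableSet {ω | t ∈ Ioc (f ω) (g ω)} μ :=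
    (nullMeasurableSet_lt hf aemeasurable_const).inter (nullMeasurableSet_le aemeasurable_const hg)
  calc ∫⁻ ω, ENNReal.ofReal (g ω - f ω) ∂μ
      = ∫⁻ ω, ∫⁻ t, (Ioc (f ω) (g ω)).indicator 1 t ∂volume ∂μ := by
        simp only [lintegral_indicator_one measurableSet_Ioc, Real.volume_Ioc]
    _ = ∫⁻ t, ∫⁻ ω, {ω | t ∈ Ioc (f ω) (g ω)}.indicator 1 ω ∂μ ∂volume :=
        lintegral_lintegral_swap (aemeasurable_const.indicator₀ hregion)
    _ = ∫⁻ t, μ {ω | t ∈ Ioc (f ω) (g ω)} :=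
        lintegral_congr fun t => lintegral_indicator_one₀ (hslice t)

lemma lintegral_ofReal_sub_le_of_measure_mem_Ioc_le {C : ℝ≥0∞} (hf : AEMeasurable f μ)
    (hg : AEMeasurable g μ) (ha : ∀ ω, a ≤ f ω) (hb : ∀ ω, g ω ≤ b)
    (hC : ∀ t, μ {ω | t ∈ Ioc (f ω) (g ω)} ≤ C) :
    ∫⁻ ω, ENNReal.ofReal (g ω - f ω) ∂μ ≤ ENNReal.ofReal (b - a) * C := by
  have hsupport : (fun t => μ {ω | t ∈ Ioc (f ω) (g ω)}).support ⊆ Ioc a b := fun t ht =>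
    have ⟨ω, hω⟩ := nonempty_of_measure_ne_zero ht
    Ioc_subset_Ioc (ha ω) (hb ω) hω
  calc ∫⁻ ω, ENNReal.ofReal (g ω - f ω) ∂μ
      = ∫⁻ t in Ioc a b, μ {ω | t ∈ Ioc (f ω) (g ω)} := by
        rw [lintegral_ofReal_sub_eq_lintegral_measure_mem_Ioc hf hg,
          setLIntegral_eq_of_support_subset hsupport]
    _ ≤ ∫⁻ _ in Ioc a b, C := lintegral_mono hC
    _ = ENNReal.ofReal (b - a) * C := by rw [setLIntegral_const, Real.volume_Ioc, mul_comm]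

lemma integral_sub_le_of_measure_mem_Ioc_le {C : ℝ} (hf : AEMeasurable f μ)
    (hg : AEMeasurable g μ) (ha : ∀ ω, a ≤ f ω) (hb : ∀ ω, g ω ≤ b) (hfg : ∀ ω, f ω ≤ g ω)
    (hab : a ≤ b) (hC₀ : 0 ≤ C) (hC : ∀ t, μ {ω | t ∈ Ioc (f ω) (g ω)} ≤ ENNReal.ofReal C) :
    ∫ ω, (g ω - f ω) ∂μ ≤ (b - a) * C := by
  have hab' : 0 ≤ b - a := sub_nonneg.2 hab
  rw [integral_eq_lintegral_of_nonneg_ae (ae_of_all _ fun ω => sub_nonneg.2 (hfg ω))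
    (hg.sub hf).aestronglyMeasurable]
  refine ENNReal.toReal_le_of_le_ofReal (mul_nonneg hab' hC₀) ?_
  rw [ENNReal.ofReal_mul hab']
  exact lintegral_ofReal_sub_le_of_measure_mem_Ioc_le hf hg ha hb hC

end AreaBetween

section Concentration

variable {Ω : Type*} [MeasurableSpace Ω] (μ : Measure Ω)

lemma concQ_nonneg (Y : Ω → ℝ) (s : ℝ) : 0 ≤ concQ μ Y s :=
  Real.iSup_nonneg fun _ => ENNReal.toReal_nonneg

variable [IsFiniteMeasure μ]

lemma measure_mem_Icc_le_ofReal_concQ (Y : Ω → ℝ) (s x : ℝ) :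
    μ {ω | Y ω ∈ Icc x (x + s)} ≤ ENNReal.ofReal (concQ μ Y s) := by
  have hbdd : BddAbove (range fun x => μ.real {ω | Y ω ∈ Icc x (x + s)}) :=
    ⟨μ.real univ, forall_mem_range.2 fun _ => measureReal_mono (subset_univ _)⟩
  rw [← ofReal_measureReal]
  exact ENNReal.ofReal_le_ofReal (le_ciSup hbdd x)

lemma measure_mem_Ioc_shift_le_ofReal_concQ {β : Type*} [Preorder β] {h : ℝ → β}
    (hmono : Monotone h) (Y : Ω → ℝ) (s : ℝ) (t : β) :
    μ {ω | t ∈ Ioc (h (Y ω)) (h (Y ω + s))} ≤ ENNReal.ofReal (concQ μ Y s) := by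
  obtain ⟨x, hx⟩ := exists_setOf_mem_Ioc_shift_subset_Icc hmono s t
  calc μ {ω | t ∈ Ioc (h (Y ω)) (h (Y ω + s))}
      ≤ μ {ω | Y ω ∈ Icc x (x + s)} := measure_mono fun _ hω => hx hω
    _ ≤ ENNReal.ofReal (concQ μ Y s) := measure_mem_Icc_le_ofReal_concQ μ Y s x

theorem stmt7_general {h : ℝ → ℝ} (hmono : Monotone h) {a b : ℝ} (hrange : ∀ x, h x ∈ Icc a b)
    {s : ℝ} (hs : 0 ≤ s) {Y : Ω → ℝ} (hY : AEMeasurable Y μ) :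
    |(∫ ω, h (Y ω + s) ∂μ) - ∫ ω, h (Y ω) ∂μ| ≤ (b - a) * concQ μ Y s := by
  have hmeas {Z : Ω → ℝ} (hZ : AEMeasurable Z μ) : AEMeasurable (fun ω => h (Z ω)) μ :=
    hmono.measurable.comp_aemeasurable hZ
  have hint {Z : Ω → ℝ} (hZ : AEMeasurable Z μ) : Integrable (fun ω => h (Z ω)) μ :=
    .of_mem_Icc a b (hmeas hZ) (ae_of_all _ fun _ => hrange _)
  have hYs : AEMeasurable (fun ω => Y ω + s) μ := hY.add_const s
  have hle (ω : Ω) : h (Y ω) ≤ h (Y ω + s) := hmono (le_add_of_nonneg_right hs)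
  calc |(∫ ω, h (Y ω + s) ∂μ) - ∫ ω, h (Y ω) ∂μ|
      = ∫ ω, (h (Y ω + s) - h (Y ω)) ∂μ := by
        rw [← integral_sub (hint hYs) (hint hY),
          abs_of_nonneg (integral_nonneg fun ω => sub_nonneg.2 (hle ω))]
    _ ≤ (b - a) * concQ μ Y s :=
        integral_sub_le_of_measure_mem_Ioc_le (hmeas hY) (hmeas hYs) (fun _ => (hrange _).1)
          (fun _ => (hrange _).2) hle ((hrange 0).1.trans (hrange 0).2) (concQ_nonneg μ Y s)
          (measure_mem_Ioc_shift_le_ofReal_concQ μ hmono Y s)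

end Concentration

/-- For an increasing function `h : ℝ → [0,1]`, `s > 0` and a
real random variable `Y`, `|E[h(Y+s)] − E[h(Y)]| ≤ Q(Y;s)`. -/
theorem stmt7
    {Ω : Type*} [MeasurableSpace Ω] (μ : Measure Ω) [IsProbabilityMeasure μ]
    (h : ℝ → ℝ) (hmono : Monotone h) (hrange : ∀ x, h x ∈ Set.Icc (0 : ℝ) 1)
    (s : ℝ) (hs : 0 < s)
    (Y : Ω → ℝ) (hY : Measurable Y) :
    |(∫ ω, h (Y ω + s) ∂μ) - ∫ ω, h (Y ω) ∂μ| ≤ concQ μ Y s := by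
  simpa using stmt7_general μ hmono hrange hs.le hY.aemeasurable
end

section
/- Fix an integer A ≥ 2 and let π be the identity permutation of [A]. Fix b ∈ [A] and integers (x_a)_{a∈[A]\{b}}. Then the function k ↦ Ξ_π( (x_a·1{a ≠ b} + k·1{a = b})_{a∈[A]} ), defined for k ∈ ℤ, is unimodal: there exists k₀ ∈ ℤ such that the function is non-decreasing for k ≤ k₀ and non-increasing for k ≥ k₀. Moreover, if b = 1 the function is non-decreasing on all of ℤ, and if b = A it is non-increasing on all of ℤ. -/
open scoped Classical

/-- `Ξ_π((M_a)_a)`: the indicator that `M_{π(1)} ≥ M_{π(2)} ≥ ⋯ ≥ M_{π(A)}`, divided by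
the number of permutations `ρ` with `M_{ρ(1)} ≥ ⋯ ≥ M_{ρ(A)}`. -/
noncomputable def Xi {A : ℕ} (π : Equiv.Perm (Fin A)) (M : Fin A → ℤ) : ℝ :=
  (if Antitone fun a => M (π a) then (1 : ℝ) else 0) /
    ((Finset.univ.filter fun ρ : Equiv.Perm (Fin A) =>
      Antitone fun a => M (ρ a)).card : ℝ)

/-!
`Ξ_π(M)` is the mass at `π` of the uniform distribution on the permutations sorting `M` in weakly
decreasing order. Two such permutations produce the same sorted tuple, so a value at `b` that ties
with no other entry leaves the fewest sorting permutations: if `π` is one of them, that value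
maximizes `Ξ_π` among all values at `b`. The values at `b` for which `π` sorts the tuple form an
interval, and a value strictly between two of them ties with no other entry. Hence `Ξ_π` is
quasiconcave in the value at `b`.
-/

open Equiv Function Set

section Unimodal

variable {ι β : Type*} [Preorder ι] {f : ι → β}

theorem monotoneOn_Iic_of_ordConnected_superlevel [Preorder β] {k₀ : ι}
    (hf : ∀ r, (f ⁻¹' Ici r).OrdConnected) (hmax : ∀ k, f k ≤ f k₀) : MonotoneOn f (Iic k₀) :=
  fun k _ _ hk' hkk' => (hf (f k)).out le_rfl (hmax k) ⟨hkk', hk'⟩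

theorem antitoneOn_Ici_of_ordConnected_superlevel [Preorder β] {k₀ : ι}
    (hf : ∀ r, (f ⁻¹' Ici r).OrdConnected) (hmax : ∀ k, f k ≤ f k₀) : AntitoneOn f (Ici k₀) :=
  fun _ hk k' _ hkk' => (hf (f k')).out (hmax k') le_rfl ⟨hk, hkk'⟩

theorem exists_monotoneOn_Iic_antitoneOn_Ici [Nonempty ι] [LinearOrder β]
    (hf : ∀ r, (f ⁻¹' Ici r).OrdConnected) (hfin : (range f).Finite) :
    ∃ k₀, MonotoneOn f (Iic k₀) ∧ AntitoneOn f (Ici k₀) := by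
  obtain ⟨_, ⟨k₀, rfl⟩, hmax⟩ := exists_max_image (range f) id hfin (range_nonempty f)
  rw [forall_mem_range] at hmax
  exact ⟨k₀, monotoneOn_Iic_of_ordConnected_superlevel hf hmax,
    antitoneOn_Ici_of_ordConnected_superlevel hf hmax⟩

end Unimodal

section Update

variable {ι κ α : Type*}

theorem antitone_update_iff [LinearOrder ι] [Preorder α] {x : ι → α} {b : ι} {k : α} :
    Antitone (update x b k) ↔
      AntitoneOn x {b}ᶜ ∧ (∀ i < b, k ≤ x i) ∧ ∀ i, b < i → x i ≤ k := by
  constructor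
  · intro h
    refine ⟨fun i hi j hj hij => ?_, fun i hi => ?_, fun i hi => ?_⟩
    · rw [mem_compl_singleton_iff] at hi hj
      simpa [hi, hj] using h hij
    · simpa [hi.ne] using h hi.le
    · simpa [hi.ne'] using h hi.le
  · rintro ⟨hx, hbefore, hafter⟩ i j hij
    rcases hij.eq_or_lt with rfl | hlt
    · rfl
    rcases eq_or_ne i b with rfl | hi
    · simpa [hlt.ne'] using hafter j hlt
    rcases eq_or_ne j b with rfl | hj
    · simpa [hlt.ne] using hbefore i hlt
    · simpa [hi, hj] using hx hi hj hij

theorem update_comp_eq_update_comp_of_forall_ne [DecidableEq ι] {x : ι → α} {b : ι} {k : α}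
    (hk : ∀ a ≠ b, x a ≠ k) {σ τ : κ → ι} (h : update x b k ∘ σ = update x b k ∘ τ) (l : α) :
    update x b l ∘ σ = update x b l ∘ τ := by
  funext i
  have hi : update x b k (σ i) = update x b k (τ i) := congrFun h i
  have eq_k_iff (a : ι) : update x b k a = k ↔ a = b :=
    ⟨fun ha => by_contra fun hab => hk a hab (by rwa [update_of_ne hab] at ha),
      fun ha => by rw [ha, update_self]⟩
  have hb : σ i = b ↔ τ i = b := by rw [← eq_k_iff, ← eq_k_iff, hi]
  by_cases hσ : σ i = b
  · rw [comp_apply, comp_apply, hσ, hb.mp hσ]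
  · have hτ : τ i ≠ b := mt hb.mpr hσ
    simpa [hσ, hτ] using hi

end Update

section AntitonePerms

variable {n : ℕ} {α : Type*}

/-- The permutations sorting the tuple `M` in weakly decreasing order: `Xi · M` is the uniform
distribution on this set. -/
noncomputable def antitonePerms [Preorder α] (M : Fin n → α) : Finset (Perm (Fin n)) :=
  Finset.univ.filter fun ρ => Antitone (M ∘ ρ)

theorem mem_antitonePerms [Preorder α] {M : Fin n → α} {π : Perm (Fin n)} :
    π ∈ antitonePerms M ↔ Antitone (M ∘ π) := by
  simp [antitonePerms]

theorem mem_antitonePerms_update [Preorder α] {x : Fin n → α} {b : Fin n} {k : α}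
    {π : Perm (Fin n)} :
    π ∈ antitonePerms (update x b k) ↔ AntitoneOn (x ∘ π) {π.symm b}ᶜ ∧
      (∀ i < π.symm b, k ≤ x (π i)) ∧ ∀ i, π.symm b < i → x (π i) ≤ k := by
  rw [mem_antitonePerms, update_comp_equiv, antitone_update_iff]
  rfl

theorem antitonePerms_update_subset [PartialOrder α] {x : Fin n → α} {b : Fin n} {k l : α}
    {π : Perm (Fin n)} (hk : ∀ a ≠ b, x a ≠ k) (hπk : π ∈ antitonePerms (update x b k))
    (hπl : π ∈ antitonePerms (update x b l)) :
    antitonePerms (update x b k) ⊆ antitonePerms (update x b l) := by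
  intro ρ hρ
  rw [mem_antitonePerms] at hρ hπk hπl ⊢
  have hsorted : update x b k ∘ ρ = update x b k ∘ π := Tuple.unique_antitone hρ hπk
  rwa [update_comp_eq_update_comp_of_forall_ne hk hsorted l]

end AntitonePerms

section Xi

variable {A : ℕ} {π : Perm (Fin A)} {M N : Fin A → ℤ} {x : Fin A → ℤ} {b : Fin A} {k : ℤ}

theorem Xi_eq_ite (π : Perm (Fin A)) (M : Fin A → ℤ) :
    Xi π M = if π ∈ antitonePerms M then ((antitonePerms M).card : ℝ)⁻¹ else 0 := by
  simp [Xi, antitonePerms, comp_def, ite_div]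

theorem Xi_nonneg (π : Perm (Fin A)) (M : Fin A → ℤ) : 0 ≤ Xi π M := by
  rw [Xi_eq_ite]
  positivity

theorem Xi_of_notMem (hM : π ∉ antitonePerms M) : Xi π M = 0 := by
  rw [Xi_eq_ite, if_neg hM]

theorem finite_range_Xi (π : Perm (Fin A)) : (range (Xi π)).Finite := by
  let mass (S : Finset (Perm (Fin A))) : ℝ := if π ∈ S then (S.card : ℝ)⁻¹ else 0
  have hXi : Xi π = mass ∘ antitonePerms := funext (Xi_eq_ite π)
  rw [hXi]
  exact (finite_range mass).subset (range_comp_subset_range _ _)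

theorem Xi_le_Xi_of_mem_imp (h : π ∈ antitonePerms M → Xi π M ≤ Xi π N) : Xi π M ≤ Xi π N := by
  by_cases hM : π ∈ antitonePerms M
  · exact h hM
  · exact (Xi_of_notMem hM).trans_le (Xi_nonneg π N)

theorem Xi_le_Xi_of_subset (hN : π ∈ antitonePerms N) (h : antitonePerms N ⊆ antitonePerms M) :
    Xi π M ≤ Xi π N := by
  rw [Xi_eq_ite, Xi_eq_ite, if_pos (h hN), if_pos hN]
  have hpos : 0 < (antitonePerms N).card := Finset.card_pos.mpr ⟨π, hN⟩
  gcongr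

theorem Xi_update_le_of_strict_bounds (hbefore : ∀ i < π.symm b, k < x (π i))
    (hafter : ∀ i, π.symm b < i → x (π i) < k) (l : ℤ) :
    Xi π (update x b l) ≤ Xi π (update x b k) := by
  refine Xi_le_Xi_of_mem_imp fun hl => ?_
  have hmem : π ∈ antitonePerms (update x b k) := mem_antitonePerms_update.mpr
    ⟨(mem_antitonePerms_update.mp hl).1, fun i hi => (hbefore i hi).le,
      fun i hi => (hafter i hi).le⟩
  have hne : ∀ a ≠ b, x a ≠ k := by
    intro a ha
    rcases lt_or_gt_of_ne (π.symm.injective.ne ha) with h | h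
    · simpa using (hbefore _ h).ne'
    · simpa using (hafter _ h).ne
  exact Xi_le_Xi_of_subset hmem (antitonePerms_update_subset hne hmem hl)

theorem ordConnected_superlevel_Xi_update (π : Perm (Fin A)) (x : Fin A → ℤ) (b : Fin A) (r : ℝ) :
    ((fun k => Xi π (update x b k)) ⁻¹' Ici r).OrdConnected := by
  refine ordConnected_of_Ioo fun p hp q hq _ k ⟨hpk, hkq⟩ => ?_
  simp only [mem_preimage, mem_Ici] at hp hq ⊢
  by_cases hp_mem : π ∈ antitonePerms (update x b p)
  · by_cases hq_mem : π ∈ antitonePerms (update x b q)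
    · obtain ⟨-, -, hafter⟩ := mem_antitonePerms_update.mp hp_mem
      obtain ⟨-, hbefore, -⟩ := mem_antitonePerms_update.mp hq_mem
      exact hp.trans (Xi_update_le_of_strict_bounds (fun i hi => hkq.trans_le (hbefore i hi))
        (fun i hi => (hafter i hi).trans_lt hpk) p)
    · exact (hq.trans_eq (Xi_of_notMem hq_mem)).trans (Xi_nonneg _ _)
  · exact (hp.trans_eq (Xi_of_notMem hp_mem)).trans (Xi_nonneg _ _)

theorem monotone_Xi_update_of_isMin (hb : IsMin (π.symm b)) (x : Fin A → ℤ) :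
    Monotone fun k => Xi π (update x b k) := by
  refine monotone_iff_forall_lt.mpr fun k l hkl => Xi_le_Xi_of_mem_imp fun hk => ?_
  obtain ⟨-, -, hafter⟩ := mem_antitonePerms_update.mp hk
  exact Xi_update_le_of_strict_bounds (fun i hi => (hb.not_lt hi).elim)
    (fun i hi => (hafter i hi).trans_lt hkl) k

theorem antitone_Xi_update_of_isMax (hb : IsMax (π.symm b)) (x : Fin A → ℤ) :
    Antitone fun k => Xi π (update x b k) := by
  refine antitone_iff_forall_lt.mpr fun k l hkl => Xi_le_Xi_of_mem_imp fun hl => ?_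
  obtain ⟨-, hbefore, -⟩ := mem_antitonePerms_update.mp hl
  exact Xi_update_le_of_strict_bounds (fun i hi => hkl.trans_le (hbefore i hi))
    (fun i hi => (hb.not_lt hi).elim) l

end Xi

theorem stmt12_general {A : ℕ} (π : Perm (Fin A)) (b : Fin A) (x : Fin A → ℤ) :
    (∃ k₀ : ℤ, MonotoneOn (fun k => Xi π (update x b k)) (Iic k₀) ∧
      AntitoneOn (fun k => Xi π (update x b k)) (Ici k₀)) ∧
    ((π.symm b : ℕ) = 0 → Monotone fun k => Xi π (update x b k)) ∧
    ((π.symm b : ℕ) = A - 1 → Antitone fun k => Xi π (update x b k)) := by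
  refine ⟨?_, fun hb => monotone_Xi_update_of_isMin ?_ x,
    fun hb => antitone_Xi_update_of_isMax ?_ x⟩
  · exact exists_monotoneOn_Iic_antitoneOn_Ici (ordConnected_superlevel_Xi_update π x b)
      ((finite_range_Xi π).subset (range_comp_subset_range (update x b) (Xi π)))
  · exact fun i _ => Fin.le_def.mpr (by omega)
  · exact fun i _ => Fin.le_def.mpr (by omega)

/-- For the identity permutation, a coordinate `b` and fixed integer
values `x a` of the other coordinates, the function
`k ↦ Ξ_id((x_a·1{a≠b} + k·1{a=b})_a)` is unimodal on `ℤ`; moreover it is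
non-decreasing if `b` is the first coordinate and non-increasing if `b` is the last. -/
theorem stmt12 (A : ℕ) (hA : 2 ≤ A) (b : Fin A) (x : Fin A → ℤ) :
    (∃ k₀ : ℤ,
      (∀ k k' : ℤ, k ≤ k' → k' ≤ k₀ →
        Xi (1 : Equiv.Perm (Fin A)) (Function.update x b k) ≤
          Xi (1 : Equiv.Perm (Fin A)) (Function.update x b k')) ∧
      (∀ k k' : ℤ, k₀ ≤ k → k ≤ k' →
        Xi (1 : Equiv.Perm (Fin A)) (Function.update x b k') ≤
          Xi (1 : Equiv.Perm (Fin A)) (Function.update x b k))) ∧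
    ((b : ℕ) = 0 →
      Monotone fun k : ℤ => Xi (1 : Equiv.Perm (Fin A)) (Function.update x b k)) ∧
    ((b : ℕ) = A - 1 →
      Antitone fun k : ℤ => Xi (1 : Equiv.Perm (Fin A)) (Function.update x b k)) := by
  obtain ⟨⟨k₀, hmono, hanti⟩, hends⟩ := stmt12_general 1 b x
  exact ⟨⟨k₀, fun _ _ h h' => hmono (h.trans h') h' h, fun _ _ h h' => hanti h (h.trans h') h'⟩,
    hends⟩
end
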